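/- Let ℰ be an exact structure on an abelian category 𝒜 such that 𝒜 has enough ℰ-projectives and enough ℰ-injectives, and let (𝒳,𝒴) be a complete hereditary classical cotorsion pair in 𝒜. If 𝒴 contains all ℰ-injective objects of 𝒜, then (^⊥ℰ𝒴, 𝒴) is a complete hereditary ℰ-cotorsion pair and every object A of 𝒜 admits an epimorphic ^⊥ℰ𝒴-precover p : X → A with Ker p ∈ 𝒴. -/

import Mathlib

open CategoryTheory Category Limits

universe v u

namespace ExactPaper

variable {𝒜 : Type u} [Category.{v} 𝒜] [Abelian 𝒜]

/-- A morphism is an admissible monic w.r.t. a class `c` of short complexes if it occurs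
as the first map of a member of `c`. -/
def AdmMono (c : ShortComplex 𝒜 → Prop) {X Y : 𝒜} (f : X ⟶ Y) : Prop :=
  ∃ (Z : 𝒜) (g : Y ⟶ Z) (w : f ≫ g = 0), c (ShortComplex.mk f g w)

/-- A morphism is an admissible epic w.r.t. a class `c` of short complexes if it occurs
as the second map of a member of `c`. -/
def AdmEpi (c : ShortComplex 𝒜 → Prop) {Y Z : 𝒜} (g : Y ⟶ Z) : Prop :=
  ∃ (X : 𝒜) (f : X ⟶ Y) (w : f ≫ g = 0), c (ShortComplex.mk f g w)

/-- A (Quillen) exact structure on an abelian category `𝒜`: a class of short exact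
sequences, called conflations, closed under isomorphisms, containing all split short
exact sequences, such that admissible monics and epics are closed under composition,
pushouts of admissible monics along arbitrary morphisms are admissible monics and
pullbacks of admissible epics along arbitrary morphisms are admissible epics. -/
structure ExactStructure (𝒜 : Type u) [Category.{v} 𝒜] [Abelian 𝒜] where
  conflation : ShortComplex 𝒜 → Prop
  shortExact_of_conflation : ∀ (S : ShortComplex 𝒜), conflation S → S.ShortExact
  conflation_of_iso : ∀ (S T : ShortComplex 𝒜), (S ≅ T) → conflation S → conflation T
  conflation_of_splitting : ∀ (S : ShortComplex 𝒜), S.Splitting → conflation S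
  admMono_comp : ∀ {X Y Z : 𝒜} (f : X ⟶ Y) (g : Y ⟶ Z),
    AdmMono conflation f → AdmMono conflation g → AdmMono conflation (f ≫ g)
  admEpi_comp : ∀ {X Y Z : 𝒜} (f : X ⟶ Y) (g : Y ⟶ Z),
    AdmEpi conflation f → AdmEpi conflation g → AdmEpi conflation (f ≫ g)
  admMono_pushout : ∀ {L M M' : 𝒜} (i : L ⟶ M) (f : L ⟶ M'),
    AdmMono conflation i → AdmMono conflation (pushout.inr i f)
  admEpi_pullback : ∀ {M N M' : 𝒜} (p : M ⟶ N) (g : M' ⟶ N),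
    AdmEpi conflation p → AdmEpi conflation (pullback.snd p g)

namespace ExactStructure

variable (E : ExactStructure 𝒜)

/-- An `ℰ`-projective object. -/
def EProjective (P : 𝒜) : Prop :=
  ∀ (S : ShortComplex 𝒜), E.conflation S → ∀ h : P ⟶ S.X₃, ∃ k : P ⟶ S.X₂, k ≫ S.g = h

/-- An `ℰ`-injective object. -/
def EInjective (I : 𝒜) : Prop :=
  ∀ (S : ShortComplex 𝒜), E.conflation S → ∀ h : S.X₁ ⟶ I, ∃ k : S.X₂ ⟶ I, S.f ≫ k = h

/-- `𝒜` has enough `ℰ`-projectives. -/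
def EnoughProjectives : Prop :=
  ∀ M : 𝒜, ∃ (K P : 𝒜) (i : K ⟶ P) (p : P ⟶ M) (w : i ≫ p = 0),
    E.conflation (ShortComplex.mk i p w) ∧ E.EProjective P

/-- `𝒜` has enough `ℰ`-injectives. -/
def EnoughInjectives : Prop :=
  ∀ M : 𝒜, ∃ (I C : 𝒜) (i : M ⟶ I) (p : I ⟶ C) (w : i ≫ p = 0),
    E.conflation (ShortComplex.mk i p w) ∧ E.EInjective I

/-- `Ext¹_ℰ(M,N) = 0`: every conflation `0 → N → Z → M → 0` splits. -/
def Ext1Zero (M N : 𝒜) : Prop :=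
  ∀ (Z : 𝒜) (i : N ⟶ Z) (p : Z ⟶ M) (w : i ≫ p = 0),
    E.conflation (ShortComplex.mk i p w) → ∃ r : Z ⟶ N, i ≫ r = 𝟙 N

/-- The right `ℰ`-orthogonal class `𝒳^⊥`. -/
def rightPerp (𝒳 : Set 𝒜) : Set 𝒜 := {N | ∀ X ∈ 𝒳, E.Ext1Zero X N}

/-- The left `ℰ`-orthogonal class `^⊥𝒴`. -/
def leftPerp (𝒴 : Set 𝒜) : Set 𝒜 := {M | ∀ Y ∈ 𝒴, E.Ext1Zero M Y}

/-- A class is closed under `ℰ`-extensions. -/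
def ClosedUnderExtensions (𝒯 : Set 𝒜) : Prop :=
  ∀ S : ShortComplex 𝒜, E.conflation S → S.X₁ ∈ 𝒯 → S.X₃ ∈ 𝒯 → S.X₂ ∈ 𝒯

/-- An `ℰ`-resolving class. -/
def Resolving (𝒯 : Set 𝒜) : Prop :=
  (∀ P : 𝒜, E.EProjective P → P ∈ 𝒯) ∧ E.ClosedUnderExtensions 𝒯 ∧
    ∀ S : ShortComplex 𝒜, E.conflation S → S.X₂ ∈ 𝒯 → S.X₃ ∈ 𝒯 → S.X₁ ∈ 𝒯

/-- An `ℰ`-coresolving class. -/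
def Coresolving (𝒯 : Set 𝒜) : Prop :=
  (∀ I : 𝒜, E.EInjective I → I ∈ 𝒯) ∧ E.ClosedUnderExtensions 𝒯 ∧
    ∀ S : ShortComplex 𝒜, E.conflation S → S.X₁ ∈ 𝒯 → S.X₂ ∈ 𝒯 → S.X₃ ∈ 𝒯

/-- `(𝒳,𝒴)` is a complete hereditary `ℰ`-cotorsion pair. -/
def CompleteHereditaryCotorsionPair (𝒳 𝒴 : Set 𝒜) : Prop :=
  𝒳 = E.leftPerp 𝒴 ∧ 𝒴 = E.rightPerp 𝒳 ∧
  (∀ A : 𝒜, ∃ (Y X : 𝒜) (i : Y ⟶ X) (p : X ⟶ A) (w : i ≫ p = 0),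
      E.conflation (ShortComplex.mk i p w) ∧ X ∈ 𝒳 ∧ Y ∈ 𝒴) ∧
  (∀ A : 𝒜, ∃ (Y' X' : 𝒜) (i : A ⟶ Y') (p : Y' ⟶ X') (w : i ≫ p = 0),
      E.conflation (ShortComplex.mk i p w) ∧ X' ∈ 𝒳 ∧ Y' ∈ 𝒴) ∧
  E.Resolving 𝒳

end ExactStructure

/-- `f : X ⟶ A` is an `𝒳`-precover of `A`. -/
def IsPrecover (𝒳 : Set 𝒜) {X A : 𝒜} (f : X ⟶ A) : Prop :=
  X ∈ 𝒳 ∧ ∀ X' : 𝒜, X' ∈ 𝒳 → ∀ g : X' ⟶ A, ∃ h : X' ⟶ X, h ≫ f = g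

/-- `f : X ⟶ A` is an `𝒳`-cover of `A`. -/
def IsCover (𝒳 : Set 𝒜) {X A : 𝒜} (f : X ⟶ A) : Prop :=
  IsPrecover 𝒳 f ∧ ∀ h : X ⟶ X, h ≫ f = f → IsIso h

/-- `f : A ⟶ Y` is a `𝒴`-preenvelope of `A`. -/
def IsPreenvelope (𝒴 : Set 𝒜) {A Y : 𝒜} (f : A ⟶ Y) : Prop :=
  Y ∈ 𝒴 ∧ ∀ Y' : 𝒜, Y' ∈ 𝒴 → ∀ g : A ⟶ Y', ∃ h : Y ⟶ Y', f ≫ h = g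

/-- `f : A ⟶ Y` is a `𝒴`-envelope of `A`. -/
def IsEnvelope (𝒴 : Set 𝒜) {A Y : 𝒜} (f : A ⟶ Y) : Prop :=
  IsPreenvelope 𝒴 f ∧ ∀ h : Y ⟶ Y, f ≫ h = f → IsIso h

/-- A class of objects closed under isomorphisms. -/
def ClosedUnderIsos (𝒳 : Set 𝒜) : Prop := ∀ X Y : 𝒜, (X ≅ Y) → X ∈ 𝒳 → Y ∈ 𝒳

/-- A class of objects closed under direct summands. -/
def ClosedUnderDirectSummands (𝒳 : Set 𝒜) : Prop :=
  ∀ X Y : 𝒜, (∃ (s : Y ⟶ X) (r : X ⟶ Y), s ≫ r = 𝟙 Y) → X ∈ 𝒳 → Y ∈ 𝒳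

end ExactPaper

namespace ExactPaper

open CategoryTheory Limits

variable {𝒜 : Type u} [Category.{v} 𝒜] [Abelian 𝒜]

/-- Classical `Ext¹_𝒜(M,N) = 0`: every short exact sequence `0 → N → Z → M → 0` splits. -/
def Ext1ZeroClassical (M N : 𝒜) : Prop :=
  ∀ (Z : 𝒜) (i : N ⟶ Z) (p : Z ⟶ M) (w : i ≫ p = 0),
    (ShortComplex.mk i p w).ShortExact → ∃ r : Z ⟶ N, i ≫ r = 𝟙 N

/-- The classical right orthogonal class `𝒳^⊥₁`. -/
def rightPerp1 (𝒳 : Set 𝒜) : Set 𝒜 := {N | ∀ X ∈ 𝒳, Ext1ZeroClassical X N}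

/-- The classical left orthogonal class `^⊥₁𝒴`. -/
def leftPerp1 (𝒴 : Set 𝒜) : Set 𝒜 := {M | ∀ Y ∈ 𝒴, Ext1ZeroClassical M Y}

/-- `(𝒳,𝒴)` is a complete hereditary classical cotorsion pair in `𝒜`. -/
def CompleteHereditaryClassicalCotorsionPair (𝒳 𝒴 : Set 𝒜) : Prop :=
  𝒳 = leftPerp1 𝒴 ∧ 𝒴 = rightPerp1 𝒳 ∧
  (∀ A : 𝒜, ∃ (Y X : 𝒜) (i : Y ⟶ X) (p : X ⟶ A) (w : i ≫ p = 0),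
      (ShortComplex.mk i p w).ShortExact ∧ X ∈ 𝒳 ∧ Y ∈ 𝒴) ∧
  (∀ A : 𝒜, ∃ (Y' X' : 𝒜) (i : A ⟶ Y') (p : Y' ⟶ X') (w : i ≫ p = 0),
      (ShortComplex.mk i p w).ShortExact ∧ X' ∈ 𝒳 ∧ Y' ∈ 𝒴) ∧
  (∀ (S : ShortComplex 𝒜), S.ShortExact → S.X₂ ∈ 𝒳 → S.X₃ ∈ 𝒳 → S.X₁ ∈ 𝒳)

end ExactPaper

/-!
Given `0 → A → Y' → X' → 0` exact with `Y' ∈ 𝒴` and `X' ∈ 𝒳`, embed `A` into an `ℰ`-injective `I`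
by an admissible monic. As `I ∈ 𝒴`, the map `A → I` extends to `Y'`, so `A → Y'` is a first factor
of an admissible monic and hence is itself admissible (the obscure axiom of exact categories). Thus
special `𝒴`-preenvelopes are automatically conflations. Pushing a conflation `0 → K → P → A → 0`
with `P` `ℰ`-projective out along such a preenvelope of `K` gives a special precover of `A` (the
trick of Salce). Heredity passes first from `𝒳` to `𝒴` and then from `𝒴` to `^⊥ℰ𝒴`; both are
dimension shifts, done on representatives by comparing extensions of maps along the first arrow of
a short exact sequence with lifts through the last.
-/

namespace ExactPaper

variable {𝒜 : Type u} [Category.{v} 𝒜] [Abelian 𝒜]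

theorem exists_extension_τ₁_iff_exists_lift_τ₃ {S T : ShortComplex 𝒜} (hS : S.ShortExact)
    (hT : T.ShortExact) (φ : S ⟶ T) :
    (∃ r : S.X₂ ⟶ T.X₁, S.f ≫ r = φ.τ₁) ↔ ∃ l : S.X₃ ⟶ T.X₂, l ≫ T.g = φ.τ₃ := by
  have := hS.epi_g
  have := hT.mono_f
  constructor
  · rintro ⟨r, hr⟩
    have hzero : S.f ≫ (φ.τ₂ - r ≫ T.f) = 0 := by
      rw [Preadditive.comp_sub, reassoc_of% hr, φ.comm₁₂, sub_self]
    refine ⟨hS.exact.desc _ hzero, ?_⟩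
    rw [← cancel_epi S.g, hS.exact.g_desc_assoc, Preadditive.sub_comp, assoc, T.zero, comp_zero,
      sub_zero, φ.comm₂₃]
  · rintro ⟨l, hl⟩
    have hzero : (φ.τ₂ - S.g ≫ l) ≫ T.g = 0 := by
      rw [Preadditive.sub_comp, assoc, hl, φ.comm₂₃, sub_self]
    refine ⟨hT.exact.lift _ hzero, ?_⟩
    rw [← cancel_mono T.f, assoc, hT.exact.lift_f, Preadditive.comp_sub, S.zero_assoc, zero_comp,
      sub_zero, φ.comm₁₂]

theorem exists_retraction_iff_exists_section {S : ShortComplex 𝒜} (hS : S.ShortExact) :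
    (∃ r : S.X₂ ⟶ S.X₁, S.f ≫ r = 𝟙 S.X₁) ↔ ∃ s : S.X₃ ⟶ S.X₂, s ≫ S.g = 𝟙 S.X₃ :=
  exists_extension_τ₁_iff_exists_lift_τ₃ hS hS (𝟙 S)

theorem exists_hom_of_comm₁₂ {S T : ShortComplex 𝒜} (hS : S.ShortExact) {a : S.X₁ ⟶ T.X₁}
    {b : S.X₂ ⟶ T.X₂} (comm : a ≫ T.f = S.f ≫ b) : ∃ φ : S ⟶ T, φ.τ₁ = a ∧ φ.τ₂ = b := by
  have := hS.epi_g
  have hzero : S.f ≫ b ≫ T.g = 0 := by rw [← reassoc_of% comm, T.zero, comp_zero]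
  exact ⟨⟨a, b, hS.exact.desc _ hzero, comm, (hS.exact.g_desc _ _).symm⟩, rfl, rfl⟩

theorem exists_hom_of_comm₂₃ {S T : ShortComplex 𝒜} (hT : T.ShortExact) {b : S.X₂ ⟶ T.X₂}
    {c : S.X₃ ⟶ T.X₃} (comm : b ≫ T.g = S.g ≫ c) : ∃ φ : S ⟶ T, φ.τ₂ = b ∧ φ.τ₃ = c := by
  have := hT.mono_f
  have hzero : (S.f ≫ b) ≫ T.g = 0 := by rw [assoc, comm, S.zero_assoc, zero_comp]
  exact ⟨⟨hT.exact.lift _ hzero, b, c, hT.exact.lift_f _ _, comm⟩, rfl, rfl⟩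

theorem shortExact_of_isPushout {S : ShortComplex 𝒜} (hS : S.ShortExact) {D Q : 𝒜}
    {f : S.X₁ ⟶ D} {inl : S.X₂ ⟶ Q} {inr : D ⟶ Q} (sq : IsPushout S.f f inl inr) :
    (ShortComplex.mk inr (sq.desc S.g 0 (by simp)) (by simp)).ShortExact := by
  have := hS.mono_f
  have := hS.epi_g
  have mono_inr : Mono inr := Abelian.mono_inr_of_isColimit S.f f sq.isColimit
  have isCokernel : IsColimit (CokernelCofork.ofπ (f := inr) (sq.desc S.g 0 (by simp))
      (by simp)) := by
    have : Epi (sq.desc S.g 0 (by simp)) := epi_of_epi_fac (sq.inl_desc S.g 0 (by simp))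
    refine CokernelCofork.IsColimit.ofπ' _ _ fun {T} k hk => ?_
    have hzero : S.f ≫ inl ≫ k = 0 := by rw [sq.w_assoc, hk, comp_zero]
    refine ⟨hS.exact.desc (inl ≫ k) hzero, sq.hom_ext ?_ ?_⟩
    · rw [sq.inl_desc_assoc, hS.exact.g_desc]
    · rw [sq.inr_desc_assoc, zero_comp, hk]
  exact .mk' (ShortComplex.exact_of_g_is_cokernel _ isCokernel) mono_inr
    (epi_of_isColimit_cofork isCokernel)

theorem shortExact_of_isPullback {S : ShortComplex 𝒜} (hS : S.ShortExact) {D Q : 𝒜}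
    {f : D ⟶ S.X₃} {fst : Q ⟶ S.X₂} {snd : Q ⟶ D} (sq : IsPullback fst snd S.g f) :
    (ShortComplex.mk (sq.lift S.f 0 (by simp)) snd (by simp)).ShortExact := by
  have := hS.mono_f
  have := hS.epi_g
  have epi_snd : Epi snd := Abelian.epi_snd_of_isLimit S.g f sq.isLimit
  have isKernel : IsLimit (KernelFork.ofι (f := snd) (sq.lift S.f 0 (by simp)) (by simp)) := by
    have : Mono (sq.lift S.f 0 (by simp)) := mono_of_mono_fac (sq.lift_fst S.f 0 (by simp))
    refine KernelFork.IsLimit.ofι' _ _ fun {T} k hk => ?_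
    have hzero : (k ≫ fst) ≫ S.g = 0 := by rw [assoc, sq.w, reassoc_of% hk, zero_comp]
    refine ⟨hS.exact.lift (k ≫ fst) hzero, sq.hom_ext ?_ ?_⟩
    · rw [assoc, sq.lift_fst, hS.exact.lift_f]
    · rw [assoc, sq.lift_snd, comp_zero, hk]
  exact .mk' (ShortComplex.exact_of_f_is_kernel _ isKernel) (mono_of_isLimit_fork isKernel)
    epi_snd

theorem shortExact_comp_of_isPullback {S : ShortComplex 𝒜} (hS : S.ShortExact) {Z Q : 𝒜}
    {p : Z ⟶ S.X₂} [Epi p] {fst : Q ⟶ Z} {snd : Q ⟶ S.X₁} (sq : IsPullback fst snd p S.f) :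
    (ShortComplex.mk fst (p ≫ S.g) (by simp [sq.w_assoc])).ShortExact := by
  have := hS.mono_f
  have := hS.epi_g
  have isKernel : IsLimit (KernelFork.ofι (f := p ≫ S.g) fst (by simp [sq.w_assoc])) := by
    have : Mono fst := sq.mono_fst_of_mono
    refine KernelFork.IsLimit.ofι' _ _ fun {T} k hk => ?_
    have hzero : (k ≫ p) ≫ S.g = 0 := by rw [assoc, hk]
    exact ⟨sq.lift k (hS.exact.lift (k ≫ p) hzero) (hS.exact.lift_f _ hzero).symm,
      sq.lift_fst _ _ _⟩
  exact .mk' (ShortComplex.exact_of_f_is_kernel _ isKernel) (mono_of_isLimit_fork isKernel)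
    (epi_comp p S.g)

theorem admMono_shortExact_iff_mono {X Y : 𝒜} {f : X ⟶ Y} :
    AdmMono (fun S : ShortComplex 𝒜 => S.ShortExact) f ↔ Mono f :=
  ⟨fun ⟨_, _, _, h⟩ => h.mono_f, fun hf => ⟨cokernel f, cokernel.π f, cokernel.condition f,
    .mk' (ShortComplex.exact_cokernel f) hf coequalizer.π_epi⟩⟩

theorem admEpi_shortExact_iff_epi {X Y : 𝒜} {f : X ⟶ Y} :
    AdmEpi (fun S : ShortComplex 𝒜 => S.ShortExact) f ↔ Epi f :=
  ⟨fun ⟨_, _, _, h⟩ => h.epi_g, fun hf => ⟨kernel f, kernel.ι f, kernel.condition f,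
    .mk' (ShortComplex.exact_kernel f) equalizer.ι_mono hf⟩⟩

namespace ExactStructure

/-- The largest exact structure on an abelian category, whose conflations are all short exact
sequences. Its orthogonality notions unfold to the classical ones, e.g.
`(maximal 𝒜).leftPerp 𝒴` is `leftPerp1 𝒴` by definition. -/
def maximal (𝒜 : Type u) [Category.{v} 𝒜] [Abelian 𝒜] : ExactStructure 𝒜 where
  conflation S := S.ShortExact
  shortExact_of_conflation _ hS := hS
  conflation_of_iso _ _ e hS := ShortComplex.shortExact_of_iso e hS
  conflation_of_splitting _ s := s.shortExact
  admMono_comp f g hf hg := by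
    rw [admMono_shortExact_iff_mono] at *
    exact mono_comp f g
  admEpi_comp f g hf hg := by
    rw [admEpi_shortExact_iff_epi] at *
    exact epi_comp f g
  admMono_pushout i f hi := by
    rw [admMono_shortExact_iff_mono] at *
    infer_instance
  admEpi_pullback p f hp := by
    rw [admEpi_shortExact_iff_epi] at *
    infer_instance

variable (E : ExactStructure 𝒜)

/-- `𝒯` is closed under kernels of admissible epics between its objects. -/
def ClosedUnderKernels (𝒯 : Set 𝒜) : Prop :=
  ∀ S : ShortComplex 𝒜, E.conflation S → S.X₂ ∈ 𝒯 → S.X₃ ∈ 𝒯 → S.X₁ ∈ 𝒯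

/-- `𝒯` is closed under cokernels of admissible monics between its objects. -/
def ClosedUnderCokernels (𝒯 : Set 𝒜) : Prop :=
  ∀ S : ShortComplex 𝒜, E.conflation S → S.X₁ ∈ 𝒯 → S.X₂ ∈ 𝒯 → S.X₃ ∈ 𝒯

/-- Every object `A` has a conflation `0 → Y → X → A → 0` with `X ∈ 𝒳` and `Y ∈ 𝒴`: the first half
of completeness, a special `𝒳`-precover when `(𝒳, 𝒴)` is a cotorsion pair. -/
def HasSpecialPrecovers (𝒳 𝒴 : Set 𝒜) : Prop :=
  ∀ A : 𝒜, ∃ (Y X : 𝒜) (i : Y ⟶ X) (p : X ⟶ A) (w : i ≫ p = 0),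
    E.conflation (ShortComplex.mk i p w) ∧ X ∈ 𝒳 ∧ Y ∈ 𝒴

/-- Every object `A` has a conflation `0 → A → Y → X → 0` with `X ∈ 𝒳` and `Y ∈ 𝒴`: the second half
of completeness, a special `𝒴`-preenvelope when `(𝒳, 𝒴)` is a cotorsion pair. -/
def HasSpecialPreenvelopes (𝒳 𝒴 : Set 𝒜) : Prop :=
  ∀ A : 𝒜, ∃ (Y X : 𝒜) (i : A ⟶ Y) (p : Y ⟶ X) (w : i ≫ p = 0),
    E.conflation (ShortComplex.mk i p w) ∧ X ∈ 𝒳 ∧ Y ∈ 𝒴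

variable {E}

theorem conflation_of_admMono {S : ShortComplex 𝒜} (hS : S.ShortExact)
    (hf : AdmMono E.conflation S.f) : E.conflation S := by
  obtain ⟨Z, g, w, hT⟩ := hf
  have hT' := E.shortExact_of_conflation _ hT
  let e := IsColimit.coconePointUniqueUpToIso hT'.gIsCokernel hS.gIsCokernel
  have hge : g ≫ e.hom = S.g := IsColimit.comp_coconePointUniqueUpToIso_hom
    hT'.gIsCokernel hS.gIsCokernel WalkingParallelPair.one
  refine E.conflation_of_iso _ S ?_ hT
  exact ShortComplex.isoMk (Iso.refl _) (Iso.refl _) e (by simp) (by simp [hge])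

theorem conflation_of_admEpi {S : ShortComplex 𝒜} (hS : S.ShortExact)
    (hg : AdmEpi E.conflation S.g) : E.conflation S := by
  obtain ⟨K, f, w, hT⟩ := hg
  have hT' := E.shortExact_of_conflation _ hT
  let e := IsLimit.conePointUniqueUpToIso hT'.fIsKernel hS.fIsKernel
  have hef : e.hom ≫ S.f = f := IsLimit.conePointUniqueUpToIso_hom_comp
    hT'.fIsKernel hS.fIsKernel WalkingParallelPair.zero
  refine E.conflation_of_iso _ S ?_ hT
  exact ShortComplex.isoMk e (Iso.refl _) (Iso.refl _) (by simp [hef]) (by simp)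

theorem conflation_of_isPushout {S : ShortComplex 𝒜} (hS : E.conflation S) {D Q : 𝒜}
    {f : S.X₁ ⟶ D} {inl : S.X₂ ⟶ Q} {inr : D ⟶ Q} (sq : IsPushout S.f f inl inr) :
    E.conflation (ShortComplex.mk inr (sq.desc S.g 0 (by simp)) (by simp)) := by
  refine conflation_of_admMono (shortExact_of_isPushout (E.shortExact_of_conflation S hS) sq) ?_
  obtain ⟨C, g, w, hg⟩ := E.admMono_pushout S.f f ⟨_, _, _, hS⟩
  refine ⟨C, sq.isoPushout.hom ≫ g, by simp [w], E.conflation_of_iso _ _ ?_ hg⟩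
  exact ShortComplex.isoMk (Iso.refl _) sq.isoPushout.symm (Iso.refl _) (by simp) (by simp)

theorem conflation_of_isPullback {S : ShortComplex 𝒜} (hS : E.conflation S) {D Q : 𝒜}
    {f : D ⟶ S.X₃} {fst : Q ⟶ S.X₂} {snd : Q ⟶ D} (sq : IsPullback fst snd S.g f) :
    E.conflation (ShortComplex.mk (sq.lift S.f 0 (by simp)) snd (by simp)) := by
  refine conflation_of_admEpi (shortExact_of_isPullback (E.shortExact_of_conflation S hS) sq) ?_
  obtain ⟨K, k, w, hk⟩ := E.admEpi_pullback S.g f ⟨_, _, _, hS⟩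
  refine ⟨K, k ≫ sq.isoPullback.inv, by simp [w], E.conflation_of_iso _ _ ?_ hk⟩
  exact ShortComplex.isoMk (Iso.refl _) sq.isoPullback.symm (Iso.refl _) (by simp) (by simp)

theorem conflation_comp_of_isPullback {S : ShortComplex 𝒜} (hS : E.conflation S) {Z Q : 𝒜}
    {p : Z ⟶ S.X₂} (hp : AdmEpi E.conflation p) {fst : Q ⟶ Z} {snd : Q ⟶ S.X₁}
    (sq : IsPullback fst snd p S.f) :
    E.conflation (ShortComplex.mk fst (p ≫ S.g) (by simp [sq.w_assoc])) := by
  have : Epi p := let ⟨_, _, _, h⟩ := hp; (E.shortExact_of_conflation _ h).epi_g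
  exact conflation_of_admEpi
    (shortExact_comp_of_isPullback (E.shortExact_of_conflation S hS) sq)
    (E.admEpi_comp p S.g hp ⟨_, _, _, hS⟩)

theorem conflation_of_isIso_τ₁ {S T : ShortComplex 𝒜} (hS : S.ShortExact) (hT : E.conflation T)
    (φ : S ⟶ T) [IsIso φ.τ₁] : E.conflation S := by
  have sq : IsPullback (pullback.fst T.g φ.τ₃) (pullback.snd T.g φ.τ₃) T.g φ.τ₃ :=
    .of_hasPullback T.g φ.τ₃
  have hP := conflation_of_isPullback hT sq
  obtain ⟨ψ, hψ₁, hψ₃⟩ : ∃ ψ : S ⟶ ShortComplex.mk (sq.lift T.f 0 (by simp))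
      (pullback.snd T.g φ.τ₃) (by simp), ψ.τ₁ = φ.τ₁ ∧ ψ.τ₃ = 𝟙 S.X₃ :=
    ⟨{ τ₁ := φ.τ₁
       τ₂ := sq.lift φ.τ₂ S.g φ.comm₂₃
       τ₃ := 𝟙 S.X₃
       comm₁₂ := sq.hom_ext (by simp [φ.comm₁₂]) (by simp) }, rfl, rfl⟩
  have : IsIso ψ.τ₁ := hψ₁ ▸ inferInstance
  have : IsIso ψ.τ₃ := hψ₃ ▸ inferInstance
  have : IsIso ψ.τ₂ := ShortComplex.isIso₂_of_shortExact_of_isIso₁₃ ψ hS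
    (E.shortExact_of_conflation _ hP)
  have : IsIso ψ := ShortComplex.isIso_of_isIso ψ
  exact E.conflation_of_iso _ S (asIso ψ).symm hP

/-- The obscure axiom of exact categories. -/
theorem conflation_of_admMono_comp {S : ShortComplex 𝒜} (hS : S.ShortExact) {I : 𝒜}
    {g : S.X₂ ⟶ I} (hg : AdmMono E.conflation (S.f ≫ g)) : E.conflation S := by
  obtain ⟨D, q, w, hT⟩ := hg
  obtain ⟨φ, hφ₁, -⟩ := exists_hom_of_comm₁₂ (T := ShortComplex.mk (S.f ≫ g) q w) hS
    (id_comp (S.f ≫ g))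
  have : IsIso φ.τ₁ := hφ₁ ▸ inferInstance
  exact conflation_of_isIso_τ₁ hS hT φ

theorem Ext1Zero.exists_extension {S : ShortComplex 𝒜} {Y : 𝒜} (hY : E.Ext1Zero S.X₃ Y)
    (hS : E.conflation S) (f : S.X₁ ⟶ Y) : ∃ k : S.X₂ ⟶ Y, S.f ≫ k = f := by
  have sq := IsPushout.of_hasPushout S.f f
  obtain ⟨r, hr⟩ := hY _ _ _ _ (conflation_of_isPushout hS sq)
  exact ⟨pushout.inl S.f f ≫ r, by rw [sq.w_assoc, hr, comp_id]⟩

theorem Ext1Zero.exists_lift {S : ShortComplex 𝒜} {X : 𝒜} (hX : E.Ext1Zero X S.X₁)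
    (hS : E.conflation S) (f : X ⟶ S.X₃) : ∃ k : X ⟶ S.X₂, k ≫ S.g = f := by
  have sq := IsPullback.of_hasPullback S.g f
  have hP := conflation_of_isPullback hS sq
  obtain ⟨s, hs⟩ := (exists_retraction_iff_exists_section (E.shortExact_of_conflation _ hP)).1
    (hX _ _ _ _ hP)
  dsimp only at s hs
  exact ⟨s ≫ pullback.fst S.g f, by rw [assoc, sq.w, reassoc_of% hs]⟩

theorem EProjective.mem_leftPerp {P : 𝒜} (hP : E.EProjective P) (𝒴 : Set 𝒜) :
    P ∈ E.leftPerp 𝒴 := fun _ _ _ _ _ _ hS =>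
  (exists_retraction_iff_exists_section (E.shortExact_of_conflation _ hS)).2 (hP _ hS (𝟙 P))

theorem closedUnderDirectSummands_rightPerp (𝒳 : Set 𝒜) :
    ClosedUnderDirectSummands (E.rightPerp 𝒳) := by
  rintro Y N ⟨s, r, hsr⟩ hY X hX Z i p w hS
  obtain ⟨k, hk⟩ := (hY X hX).exists_extension hS s
  exact ⟨k ≫ r, by rw [reassoc_of% hk, hsr]⟩

theorem closedUnderExtensions_leftPerp (𝒴 : Set 𝒜) :
    E.ClosedUnderExtensions (E.leftPerp 𝒴) := by
  intro S hS h₁ h₃ Y hY Z i p w hT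
  have sq := IsPullback.of_hasPullback p S.f
  obtain ⟨r, hr⟩ := h₁ Y hY _ _ _ _ (conflation_of_isPullback hT sq)
  have hU := conflation_comp_of_isPullback hS ⟨_, _, _, hT⟩ sq
  obtain ⟨k, hk⟩ := (h₃ Y hY).exists_extension (S := .mk _ (p ≫ S.g) _) hU r
  refine ⟨k, ?_⟩
  calc i ≫ k = sq.lift i 0 (by simp [w]) ≫ pullback.fst p S.f ≫ k := by rw [sq.lift_fst_assoc]
    _ = sq.lift i 0 (by simp [w]) ≫ r := congrArg _ hk
    _ = 𝟙 Y := hr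

theorem closedUnderCokernels_rightPerp {𝒳 : Set 𝒜}
    (hgen : ∀ A : 𝒜, ∃ X ∈ 𝒳, ∃ p : X ⟶ A, AdmEpi E.conflation p)
    (hker : E.ClosedUnderKernels 𝒳) : E.ClosedUnderCokernels (E.rightPerp 𝒳) := by
  intro S hS h₁ h₂ X hX Z i p w hT
  obtain ⟨X', hX', q, hq⟩ := hgen Z
  obtain ⟨K, j, wj, hU⟩ := E.admEpi_comp q p hq ⟨_, _, _, hT⟩
  have hU' := E.shortExact_of_conflation _ hU
  have hT' := E.shortExact_of_conflation _ hT
  have hK : K ∈ 𝒳 := hker _ hU hX' hX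
  obtain ⟨φ, -, hφ₃⟩ := exists_hom_of_comm₂₃ (S := ShortComplex.mk j (q ≫ p) wj) hT'
    (comp_id (q ≫ p)).symm
  obtain ⟨l, hl⟩ := (h₁ K hK).exists_lift hS φ.τ₁
  obtain ⟨m, hm⟩ := (h₂ X hX).exists_extension hU l
  have hext : j ≫ m ≫ S.g = φ.τ₁ := by rw [reassoc_of% hm, hl]
  rw [exists_retraction_iff_exists_section hT', ← hφ₃]
  exact (exists_extension_τ₁_iff_exists_lift_τ₃ hU' hT' φ).1 ⟨m ≫ S.g, hext⟩

theorem closedUnderKernels_leftPerp {𝒴 : Set 𝒜}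
    (hcogen : ∀ A : 𝒜, ∃ Y ∈ 𝒴, ∃ j : A ⟶ Y, AdmMono E.conflation j)
    (hcoker : E.ClosedUnderCokernels 𝒴) : E.ClosedUnderKernels (E.leftPerp 𝒴) := by
  intro S hS h₂ h₃ Y hY Z i p w hT
  obtain ⟨Y', hY', j, hj⟩ := hcogen Z
  obtain ⟨D, q, wq, hU⟩ := E.admMono_comp i j ⟨_, _, _, hT⟩ hj
  have hU' := E.shortExact_of_conflation _ hU
  have hT' := E.shortExact_of_conflation _ hT
  have hD : D ∈ 𝒴 := hcoker _ hU hY hY'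
  obtain ⟨φ, hφ₁, -⟩ := exists_hom_of_comm₁₂ (T := ShortComplex.mk (i ≫ j) q wq) hT'
    (id_comp (i ≫ j))
  obtain ⟨m, hm⟩ := (h₃ D hD).exists_extension hS φ.τ₃
  obtain ⟨l, hl⟩ := (h₂ Y hY).exists_lift hU m
  have hlift : (S.f ≫ l) ≫ q = φ.τ₃ := by rw [assoc, hl, hm]
  rw [← hφ₁]
  exact (exists_extension_τ₁_iff_exists_lift_τ₃ hT' hU' φ).2 ⟨S.f ≫ l, hlift⟩

theorem rightPerp_leftPerp_eq {𝒴 : Set 𝒜} (hsummand : ClosedUnderDirectSummands 𝒴)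
    (henv : E.HasSpecialPreenvelopes (E.leftPerp 𝒴) 𝒴) : E.rightPerp (E.leftPerp 𝒴) = 𝒴 := by
  refine Set.Subset.antisymm (fun N hN => ?_) fun N hN X hX => hX N hN
  obtain ⟨Y, X, i, p, w, hS, hX, hY⟩ := henv N
  obtain ⟨r, hr⟩ := hN X hX Y i p w hS
  exact hsummand Y N ⟨i, r, hr⟩ hY

/-- Salce's trick. -/
theorem HasSpecialPreenvelopes.hasSpecialPrecovers {𝒴 : Set 𝒜} (hproj : E.EnoughProjectives)
    (henv : E.HasSpecialPreenvelopes (E.leftPerp 𝒴) 𝒴) :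
    E.HasSpecialPrecovers (E.leftPerp 𝒴) 𝒴 := by
  intro A
  obtain ⟨K, P, i, p, w, hS, hP⟩ := hproj A
  obtain ⟨Y, X, j, q, wj, hT, hX, hY⟩ := henv K
  have sq := IsPushout.of_hasPushout i j
  have hQ : pushout i j ∈ E.leftPerp 𝒴 := closedUnderExtensions_leftPerp 𝒴 _
    (conflation_of_isPushout hT sq.flip) (hP.mem_leftPerp 𝒴) hX
  exact ⟨Y, pushout i j, _, _, _, conflation_of_isPushout hS sq, hQ, hY⟩

theorem completeHereditaryCotorsionPair_leftPerp {𝒴 : Set 𝒜} (hproj : E.EnoughProjectives)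
    (hsummand : ClosedUnderDirectSummands 𝒴) (hcoker : E.ClosedUnderCokernels 𝒴)
    (henv : E.HasSpecialPreenvelopes (E.leftPerp 𝒴) 𝒴) :
    E.CompleteHereditaryCotorsionPair (E.leftPerp 𝒴) 𝒴 := by
  have hcogen : ∀ A : 𝒜, ∃ Y ∈ 𝒴, ∃ j : A ⟶ Y, AdmMono E.conflation j := fun A =>
    let ⟨Y, _, j, _, _, hS, _, hY⟩ := henv A
    ⟨Y, hY, j, _, _, _, hS⟩
  exact ⟨rfl, (rightPerp_leftPerp_eq hsummand henv).symm, henv.hasSpecialPrecovers hproj, henv,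
    fun _ hP => hP.mem_leftPerp 𝒴, closedUnderExtensions_leftPerp 𝒴,
    closedUnderKernels_leftPerp hcogen hcoker⟩

theorem exists_epi_isPrecover_of_hasSpecialPrecovers {𝒴 : Set 𝒜}
    (hsummand : ClosedUnderDirectSummands 𝒴) (hcov : E.HasSpecialPrecovers (E.leftPerp 𝒴) 𝒴)
    (A : 𝒜) : ∃ (X : 𝒜) (p : X ⟶ A), Epi p ∧ IsPrecover (E.leftPerp 𝒴) p ∧ kernel p ∈ 𝒴 := by
  obtain ⟨Y, X, i, p, w, hS, hX, hY⟩ := hcov A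
  have hS' := E.shortExact_of_conflation _ hS
  let e : kernel p ≅ Y := IsLimit.conePointUniqueUpToIso (kernelIsKernel p) hS'.fIsKernel
  exact ⟨X, p, hS'.epi_g, ⟨hX, fun X' hX' => (hX' Y hY).exists_lift hS⟩,
    hsummand Y (kernel p) ⟨e.hom, e.inv, e.hom_inv_id⟩ hY⟩

theorem leftPerp_subset_leftPerp {F : ExactStructure 𝒜}
    (hEF : ∀ S, E.conflation S → F.conflation S) (𝒴 : Set 𝒜) : F.leftPerp 𝒴 ⊆ E.leftPerp 𝒴 :=
  fun _ hX Y hY Z i p w hS => hX Y hY Z i p w (hEF _ hS)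

theorem HasSpecialPreenvelopes.of_eInjective_mem {F : ExactStructure 𝒜}
    (hEF : ∀ S, E.conflation S → F.conflation S) (hinj : E.EnoughInjectives) {𝒴 : Set 𝒜}
    (hI : ∀ I : 𝒜, E.EInjective I → I ∈ 𝒴) (henv : F.HasSpecialPreenvelopes (F.leftPerp 𝒴) 𝒴) :
    E.HasSpecialPreenvelopes (E.leftPerp 𝒴) 𝒴 := by
  intro A
  obtain ⟨Y, X, i, p, w, hS, hX, hY⟩ := henv A
  obtain ⟨I, C, j, q, wj, hT, hIinj⟩ := hinj A
  obtain ⟨g, rfl⟩ := (hX I (hI I hIinj)).exists_extension hS j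
  exact ⟨Y, X, i, p, w, conflation_of_admMono_comp (F.shortExact_of_conflation _ hS) ⟨_, _, _, hT⟩,
    leftPerp_subset_leftPerp hEF 𝒴 hX, hY⟩

end ExactStructure

namespace CompleteHereditaryClassicalCotorsionPair

variable {𝒳 𝒴 : Set 𝒜}

theorem closedUnderDirectSummands (hpair : CompleteHereditaryClassicalCotorsionPair 𝒳 𝒴) :
    ClosedUnderDirectSummands 𝒴 :=
  hpair.2.1 ▸ ExactStructure.closedUnderDirectSummands_rightPerp (E := .maximal 𝒜) 𝒳

theorem closedUnderCokernels (hpair : CompleteHereditaryClassicalCotorsionPair 𝒳 𝒴) :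
    (ExactStructure.maximal 𝒜).ClosedUnderCokernels 𝒴 := by
  obtain ⟨-, h𝒴, hcov, -, hker⟩ := hpair
  rw [h𝒴]
  refine ExactStructure.closedUnderCokernels_rightPerp (E := .maximal 𝒜) (fun A => ?_) hker
  obtain ⟨Y, X, i, p, w, hS, hX, -⟩ := hcov A
  exact ⟨X, hX, p, Y, i, w, hS⟩

theorem hasSpecialPreenvelopes (hpair : CompleteHereditaryClassicalCotorsionPair 𝒳 𝒴) :
    (ExactStructure.maximal 𝒜).HasSpecialPreenvelopes
      ((ExactStructure.maximal 𝒜).leftPerp 𝒴) 𝒴 := by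
  obtain ⟨rfl, -, -, henv, -⟩ := hpair
  exact henv

end CompleteHereditaryClassicalCotorsionPair

end ExactPaper

open ExactPaper in
theorem eCotorsionPair_of_classical_cotorsionPair_inj_general
    {𝒜 : Type u} [Category.{v} 𝒜] [Abelian 𝒜] {E F : ExactStructure 𝒜}
    (hEF : ∀ S, E.conflation S → F.conflation S)
    (hproj : E.EnoughProjectives) (hinj : E.EnoughInjectives) {𝒴 : Set 𝒜}
    (hsummand : ClosedUnderDirectSummands 𝒴) (hcoker : E.ClosedUnderCokernels 𝒴)
    (henv : F.HasSpecialPreenvelopes (F.leftPerp 𝒴) 𝒴)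
    (hI : ∀ I : 𝒜, E.EInjective I → I ∈ 𝒴) :
    E.CompleteHereditaryCotorsionPair (E.leftPerp 𝒴) 𝒴 ∧
      ∀ A : 𝒜, ∃ (X : 𝒜) (p : X ⟶ A),
        Epi p ∧ IsPrecover (E.leftPerp 𝒴) p ∧ kernel p ∈ 𝒴 := by
  have henv' : E.HasSpecialPreenvelopes (E.leftPerp 𝒴) 𝒴 := henv.of_eInjective_mem hEF hinj hI
  exact ⟨ExactStructure.completeHereditaryCotorsionPair_leftPerp hproj hsummand hcoker henv',
    ExactStructure.exists_epi_isPrecover_of_hasSpecialPrecovers hsummand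
      (henv'.hasSpecialPrecovers hproj)⟩

open ExactPaper CategoryTheory Limits in
/-- **Corollary 3.6(2)**: if `(𝒳,𝒴)` is a complete hereditary classical cotorsion pair
and `𝒴` contains all `ℰ`-injective objects, then `(^⊥ℰ𝒴, 𝒴)` is a complete hereditary
`ℰ`-cotorsion pair and every object `A` admits an epimorphic `^⊥ℰ𝒴`-precover
`p : X ⟶ A` with `Ker p ∈ 𝒴`. -/
theorem eCotorsionPair_of_classical_cotorsionPair_inj
    {𝒜 : Type u} [Category.{v} 𝒜] [Abelian 𝒜]
    (E : ExactStructure 𝒜)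
    (hproj : E.EnoughProjectives) (hinj : E.EnoughInjectives)
    (𝒳 𝒴 : Set 𝒜)
    (hpair : CompleteHereditaryClassicalCotorsionPair 𝒳 𝒴)
    (hI : ∀ I : 𝒜, E.EInjective I → I ∈ 𝒴) :
    E.CompleteHereditaryCotorsionPair (E.leftPerp 𝒴) 𝒴 ∧
      ∀ A : 𝒜, ∃ (X : 𝒜) (p : X ⟶ A),
        Epi p ∧ IsPrecover (E.leftPerp 𝒴) p ∧ kernel p ∈ 𝒴 := by
  exact eCotorsionPair_of_classical_cotorsionPair_inj_general (F := .maximal 𝒜)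
    E.shortExact_of_conflation hproj hinj hpair.closedUnderDirectSummands
    (fun S hS => hpair.closedUnderCokernels S (E.shortExact_of_conflation S hS))
    hpair.hasSpecialPreenvelopes hI
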